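/- Let s = (s_1,…,s_d) ∈ ℕ^d with s_1 > 1, weight |s| = s_1 + … + s_d and partial sums |s|_r = s_1 + … + s_r (|s|_0 = 0). For indices n_1 ≥ … ≥ n_{|s|} ≥ 1, set Q(s) := Σ_{r=1}^{d} (n_{|s|_{r−1}+1} − n_{|s|_r}). Then ζ*(s) = Σ_{n_1 ≥ n_2 ≥ … ≥ n_{|s|} ≥ 1} 1 / ( (Q(s)+1) · (Q(s)+n_{|s|}+1) · n_1 n_2 ⋯ n_{|s|−1} ). -/

import Mathlib

/-- One-dimensional polylogarithm `Li_s(x) = ∑_{n≥1} x^n/n^s`. -/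
noncomputable def Li (s : ℕ) (x : ℝ) : ℝ := ∑' n : ℕ, x ^ (n + 1) / (n + 1 : ℝ) ^ s

/-- Multiple polylogarithm
`Li*_{s₁,…,s_d}(x₁,…,x_d) = ∑_{n₁ ≥ ⋯ ≥ n_d ≥ 1} ∏ᵢ xᵢ^{nᵢ}/nᵢ^{sᵢ}`. -/
noncomputable def LiStar (s : List ℕ) (x : List ℝ) : ℝ :=
  ∑' m : {m : Fin s.length → ℕ // (∀ i j : Fin s.length, i ≤ j → m j ≤ m i) ∧ ∀ i, 1 ≤ m i},
    ∏ i : Fin s.length, x.getD (i : ℕ) 0 ^ m.1 i / (m.1 i : ℝ) ^ s.get i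

/-- `ent m α` is the entry `n_{α+1}` (0-indexed access) of the index tuple `m`,
with junk value `1` out of range. -/
def ent {L : ℕ} (m : Fin L → ℕ) (α : ℕ) : ℕ :=
  if h : α < L then m ⟨α, h⟩ else 1

/-- `Q(s)` as a function of the summation indices `n₁, n₂, …` (0-indexed via `ent`):
`Q(s) = ∑_{r=1}^{d} (n_{|s|_{r-1}+1} − n_{|s|_r})`. -/
def Qs (s : List ℕ) {L : ℕ} (t : Fin L → ℕ) : ℕ :=
  ∑ r ∈ Finset.range s.length,
    (ent t ((s.take r).sum) - ent t ((s.take (r + 1)).sum - 1))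

/-!
Replace the summand of the series by `x ^ Q * (1 - x ^ n_L) / (n₁ ⋯ n_L)`, where `L = |s|`; its
integral over `[0, 1]` is the original summand. Let `P_x φ (n)` be the mean of `φ` over the number
of successes in `n` independent trials with failure probability `x`, and let `M` be multiplication
by the argument. Since `P_x (M ψ) (n + 1) / (n + 1) = (1 - x) P_x (ψ (· + 1)) (n)`, one obtains

* `∑_{m ≤ n} P_x (M ψ) (m) / m = P_x (∑_{1 ≤ j ≤ ·} ψ j) (n)`,
* `∑_{1 ≤ m ≤ n} x ^ (n - m) P_x (M ψ) (m) / m = P_x ψ (n)` if `ψ 0 = 0`.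

Peeling off the largest index of the deformed series is the left-hand side of the first identity
when a new block of `s` begins and of the second one inside a block. Hence the deformed series
truncated at `n₁ ≤ N` equals `P_x` of the truncated zeta-star values, evaluated at `N`. Integration
in `x` turns `P_x φ (N)` into the uniform mean of `φ 0, …, φ N`, so the truncated series are the
Cesàro means of the truncated zeta-star values, and for a monotone sequence convergence of these
means is equivalent to convergence of the sequence, with the same limit.
-/

open Finset Filter Topology

/-! ### Cesàro means of monotone sequences -/

theorem tendsto_cesaro_iff_of_monotone {u : ℕ → ℝ} (hu : Monotone u) {l : ℝ} :
    Tendsto (fun n : ℕ ↦ (∑ k ∈ range (n + 1), u k) / ((n : ℝ) + 1)) atTop (𝓝 l) ↔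
      Tendsto u atTop (𝓝 l) := by
  have mean_tendsto {v : ℕ → ℝ} {c : ℝ} (hv : Tendsto v atTop (𝓝 c)) :
      Tendsto (fun n : ℕ ↦ (∑ k ∈ range (n + 1), v k) / ((n : ℝ) + 1)) atTop (𝓝 c) := by
    simpa [div_eq_inv_mul] using (tendsto_add_atTop_iff_nat 1).2 hv.cesaro
  refine ⟨fun hmean ↦ ?_, mean_tendsto⟩
  rcases tendsto_atTop_of_monotone hu with hu_top | ⟨c, hc⟩
  · obtain ⟨K, hK⟩ := (hu_top.eventually_gt_atTop l).exists
    -- The truncation `k ↦ u (min k K)` lies below `u` and its means tend to `u K > l`.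
    have htrunc : Tendsto (fun k ↦ u (min k K)) atTop (𝓝 (u K)) :=
      tendsto_const_nhds.congr' <| (eventually_ge_atTop K).mono fun k hk ↦ by simp [hk]
    have hle : u K ≤ l := le_of_tendsto_of_tendsto' (mean_tendsto htrunc) hmean fun n ↦ by
      gcongr
      exact hu (min_le_left _ _)
    exact absurd hK hle.not_gt
  · rwa [tendsto_nhds_unique hmean (mean_tendsto hc)]

/-! ### Weakly decreasing tuples of positive integers -/

/-- The summation range `n₁ ≥ ⋯ ≥ n_L ≥ 1` of a nested series of depth `L`. -/
abbrev AntitoneTuple (L : ℕ) : Type :=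
  {t : Fin L → ℕ // (∀ i j : Fin L, i ≤ j → t j ≤ t i) ∧ ∀ i, 1 ≤ t i}

/-- The truncated summation range `N ≥ n₁ ≥ ⋯ ≥ n_L ≥ 1`. -/
def antitoneTuples (L N : ℕ) : Finset (Fin L → ℕ) :=
  {t ∈ Fintype.piFinset fun _ ↦ Icc 1 N | ∀ i j : Fin L, i ≤ j → t j ≤ t i}

theorem mem_antitoneTuples {L N : ℕ} {t : Fin L → ℕ} :
    t ∈ antitoneTuples L N ↔
      (∀ i, 1 ≤ t i ∧ t i ≤ N) ∧ ∀ i j : Fin L, i ≤ j → t j ≤ t i := by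
  simp [antitoneTuples]

theorem antitoneTuples_zero (N : ℕ) : antitoneTuples 0 N = {Fin.elim0} := by
  ext t
  simp [mem_antitoneTuples, Subsingleton.elim t Fin.elim0]

theorem cons_mem_antitoneTuples {L N m : ℕ} {t : Fin L → ℕ} :
    (Fin.cons m t : Fin (L + 1) → ℕ) ∈ antitoneTuples (L + 1) N ↔
      m ∈ Icc 1 N ∧ t ∈ antitoneTuples L m := by
  simp only [mem_antitoneTuples, mem_Icc, Fin.forall_fin_succ, Fin.cons_zero, Fin.cons_succ,
    Fin.succ_le_succ_iff]
  constructor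
  · rintro ⟨⟨hm, ht⟩, hle, hanti⟩
    exact ⟨hm, fun i ↦ ⟨(ht i).1, hle.2 i (Fin.zero_le _)⟩, fun i ↦ (hanti i).2⟩
  · rintro ⟨hm, ht, hanti⟩
    exact ⟨⟨hm, fun i ↦ ⟨(ht i).1, (ht i).2.trans hm.2⟩⟩, ⟨fun _ ↦ le_rfl, fun i _ ↦ (ht i).2⟩,
      fun i ↦ ⟨fun h ↦ absurd h (by simp), hanti i⟩⟩

theorem sum_antitoneTuples_succ {M : Type*} [AddCommMonoid M] (L N : ℕ)
    (f : (Fin (L + 1) → ℕ) → M) :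
    ∑ t ∈ antitoneTuples (L + 1) N, f t =
      ∑ m ∈ Icc 1 N, ∑ t ∈ antitoneTuples L m, f (Fin.cons m t) := by
  rw [sum_sigma']
  refine sum_bij' (fun t _ ↦ ⟨t 0, Fin.tail t⟩) (fun p _ ↦ Fin.cons p.1 p.2) ?_ ?_ ?_ ?_ ?_
  · intro t ht
    rw [← Fin.cons_self_tail t, cons_mem_antitoneTuples] at ht
    exact mem_sigma.2 ht
  · exact fun p hp ↦ cons_mem_antitoneTuples.2 (mem_sigma.1 hp)
  all_goals simp

theorem hasSum_antitoneTuple_iff {L : ℕ} {f : (Fin L → ℕ) → ℝ} (hf : ∀ t, 0 ≤ f t) {a : ℝ} :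
    HasSum (fun t : AntitoneTuple L ↦ f t.1) a ↔
      Tendsto (fun N ↦ ∑ t ∈ antitoneTuples L N, f t) atTop (𝓝 a) := by
  have hmono : Monotone fun S : Finset (AntitoneTuple L) ↦ ∑ t ∈ S, f t.1 :=
    fun _ _ hST ↦ sum_le_sum_of_subset_of_nonneg hST fun t _ _ ↦ hf t.1
  have hexhaust : Tendsto (fun N ↦ (antitoneTuples L N).subtype
      fun t ↦ (∀ i j : Fin L, i ≤ j → t j ≤ t i) ∧ ∀ i, 1 ≤ t i) atTop atTop := by
    refine tendsto_atTop_finset_of_monotone (fun M N hMN t ht ↦ ?_) fun t ↦ ⟨∑ i, t.1 i, ?_⟩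
    · simp only [mem_subtype, mem_antitoneTuples] at ht ⊢
      exact ⟨fun i ↦ ⟨(ht.1 i).1, (ht.1 i).2.trans hMN⟩, ht.2⟩
    · simp only [mem_subtype, mem_antitoneTuples]
      exact ⟨fun i ↦ ⟨t.2.2 i, single_le_sum_of_canonicallyOrdered (mem_univ i)⟩, t.2.1⟩
  rw [HasSum, SummationFilter.unconditional_filter,
    tendsto_iff_tendsto_subseq_of_monotone hmono hexhaust]
  refine tendsto_congr fun N ↦ sum_subtype_of_mem f fun t ht ↦ ?_
  rw [mem_antitoneTuples] at ht
  exact ⟨ht.2, fun i ↦ (ht.1 i).1⟩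

/-! ### Binomial means -/

/-- The mean of `φ` over the number of successes in `n` independent trials, each failing with
probability `x`. It is encoded by conditioning on the first trial, so that no binomial
coefficients are needed. -/
def binomialMean {R : Type*} [CommRing R] (x : R) : (ℕ → R) → ℕ → R
  | φ, 0 => φ 0
  | φ, n + 1 => (1 - x) * binomialMean x (fun k ↦ φ (k + 1)) n + x * binomialMean x φ n

section BinomialMean

variable {R : Type*} [CommRing R] (x : R) (φ ψ : ℕ → R) (n : ℕ)

theorem binomialMean_succ : binomialMean x φ (n + 1) =
    (1 - x) * binomialMean x (fun k ↦ φ (k + 1)) n + x * binomialMean x φ n := by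
  rw [binomialMean]

theorem binomialMean_add : binomialMean x (fun k ↦ φ k + ψ k) n =
    binomialMean x φ n + binomialMean x ψ n := by
  induction n generalizing φ ψ with
  | zero => simp only [binomialMean]
  | succ n ih => simp only [binomialMean_succ, ih]; ring

theorem binomialMean_shift : binomialMean x (fun k ↦ φ (k + 1)) n =
    binomialMean x φ n + binomialMean x (fun k ↦ φ (k + 1) - φ k) n := by
  rw [← binomialMean_add]
  simp only [add_sub_cancel]

theorem binomialMean_const (c : R) : binomialMean x (fun _ ↦ c) n = c := by
  induction n with
  | zero => rw [binomialMean]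
  | succ n ih => rw [binomialMean_succ, ih]; ring

theorem binomialMean_zero_left : binomialMean 0 φ n = φ n := by
  induction n generalizing φ with
  | zero => rw [binomialMean]
  | succ n ih => simp [binomialMean_succ, ih]

theorem binomialMean_one_left : binomialMean 1 φ n = φ 0 := by
  induction n with
  | zero => rw [binomialMean]
  | succ n ih => simp [binomialMean_succ, ih]

theorem binomialMean_ite_eq_zero :
    binomialMean x (fun k ↦ if k = 0 then 0 else 1) n = 1 - x ^ n := by
  induction n with
  | zero => simp [binomialMean]
  | succ n ih =>
    simp only [binomialMean_succ, ih, Nat.add_eq_zero_iff, one_ne_zero, and_false, if_false,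
      binomialMean_const]
    ring

theorem binomialMean_succ_sub : binomialMean x φ (n + 1) - binomialMean x φ n =
    (1 - x) * binomialMean x (fun k ↦ φ (k + 1) - φ k) n := by
  rw [binomialMean_succ, binomialMean_shift]
  ring

theorem binomialMean_cast_mul_succ : binomialMean x (fun k ↦ k * ψ k) (n + 1) =
    (n + 1) * ((1 - x) * binomialMean x (fun k ↦ ψ (k + 1)) n) := by
  induction n generalizing ψ with
  | zero => simp [binomialMean]
  | succ n ih =>
    have hshift : binomialMean x (fun k ↦ ((k + 1 : ℕ) : R) * ψ (k + 1)) (n + 1) =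
        (n + 1) * ((1 - x) * binomialMean x (fun k ↦ ψ (k + 2)) n) +
          binomialMean x (fun k ↦ ψ (k + 1)) (n + 1) := by
      rw [← ih fun k ↦ ψ (k + 1), ← binomialMean_add]
      simp only [Nat.cast_succ, add_mul, one_mul]
    rw [binomialMean_succ, hshift, ih, binomialMean_succ x (fun k ↦ ψ (k + 1))]
    push_cast
    ring

end BinomialMean

section BinomialMeanField

variable {K : Type*} [Field K] [CharZero K] (x : K) (ψ : ℕ → K) (n : ℕ)

theorem binomialMean_cast_mul_succ_div :
    binomialMean x (fun k ↦ k * ψ k) (n + 1) / ((n + 1 : ℕ) : K) =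
      (1 - x) * binomialMean x (fun k ↦ ψ (k + 1)) n := by
  rw [binomialMean_cast_mul_succ, Nat.cast_succ, mul_div_cancel_left₀ _ n.cast_add_one_ne_zero]

theorem sum_binomialMean_cast_mul_div :
    ∑ m ∈ Icc 1 n, binomialMean x (fun k ↦ k * ψ k) m / (m : K) =
      binomialMean x (fun k ↦ ∑ j ∈ Icc 1 k, ψ j) n := by
  induction n with
  | zero => simp [binomialMean]
  | succ n ih =>
    have hdiff := binomialMean_succ_sub x (fun k ↦ ∑ j ∈ Icc 1 k, ψ j) n
    simp only [sum_Icc_succ_top (Nat.le_add_left 1 _), add_sub_cancel_left] at hdiff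
    rw [sum_Icc_succ_top (Nat.le_add_left 1 n), ih, binomialMean_cast_mul_succ_div, ← hdiff,
      add_sub_cancel]

theorem sum_pow_mul_binomialMean_cast_mul_div :
    ∑ m ∈ Icc 1 n, x ^ (n - m) * (binomialMean x (fun k ↦ k * ψ k) m / (m : K)) =
      binomialMean x ψ n - x ^ n * ψ 0 := by
  induction n with
  | zero => simp [binomialMean]
  | succ n ih =>
    have hpow : ∀ m ∈ Icc 1 n, x ^ (n + 1 - m) * (binomialMean x (fun k ↦ k * ψ k) m / (m : K)) =
        x * (x ^ (n - m) * (binomialMean x (fun k ↦ k * ψ k) m / (m : K))) := fun m hm ↦ by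
      rw [Nat.sub_add_comm (mem_Icc.1 hm).2, pow_succ']
      ring
    rw [sum_Icc_succ_top (Nat.le_add_left 1 n), sum_congr rfl hpow, ← mul_sum, ih,
      binomialMean_cast_mul_succ_div, binomialMean_succ x ψ, Nat.sub_self]
    ring

end BinomialMeanField

theorem hasDerivAt_binomialMean {𝕜 : Type*} [NontriviallyNormedField 𝕜] (φ : ℕ → 𝕜) (n : ℕ)
    (x : 𝕜) : HasDerivAt (fun y ↦ binomialMean y φ (n + 1))
      (-((n + 1) * binomialMean x (fun k ↦ φ (k + 1) - φ k) n)) x := by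
  induction n generalizing φ with
  | zero =>
    simp only [binomialMean]
    refine ((((hasDerivAt_id x).const_sub 1).mul_const (φ 1)).add
      ((hasDerivAt_id x).mul_const (φ 0))).congr_deriv ?_
    simp only [Nat.cast_zero, zero_add]
    ring
  | succ n ih =>
    simp only [binomialMean_succ _ _ (n + 1)]
    refine ((((hasDerivAt_id x).const_sub 1).mul (ih fun k ↦ φ (k + 1))).add
      ((hasDerivAt_id x).mul (ih φ))).congr_deriv ?_
    rw [binomialMean_shift x φ, binomialMean_succ x fun k ↦ φ (k + 1) - φ k, id]
    push_cast
    ring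

theorem continuous_binomialMean {R : Type*} [CommRing R] [TopologicalSpace R]
    [IsTopologicalRing R] (φ : ℕ → R) (n : ℕ) : Continuous fun x ↦ binomialMean x φ n := by
  induction n generalizing φ with
  | zero => simpa only [binomialMean] using continuous_const
  | succ n ih =>
    simp only [binomialMean_succ]
    exact ((continuous_const.sub continuous_id).mul (ih _)).add (continuous_id.mul (ih _))

theorem integral_binomialMean (φ : ℕ → ℝ) (n : ℕ) :
    ∫ x in (0 : ℝ)..1, binomialMean x φ n = (∑ k ∈ range (n + 1), φ k) / ((n : ℝ) + 1) := by
  -- The derivative of the mean of the partial sums of `φ` is a multiple of the mean of `φ`.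
  have hderiv (x : ℝ) : HasDerivAt
      (fun y ↦ -binomialMean y (fun k ↦ ∑ j ∈ range k, φ j) (n + 1) / ((n : ℝ) + 1))
      (binomialMean x φ n) x := by
    refine ((hasDerivAt_binomialMean (fun k ↦ ∑ j ∈ range k, φ j) n x).neg.div_const
      ((n : ℝ) + 1)).congr_deriv ?_
    simp only [sum_range_succ_sub_sum]
    field
  rw [intervalIntegral.integral_eq_sub_of_hasDerivAt (fun x _ ↦ hderiv x)
    ((continuous_binomialMean φ n).intervalIntegrable 0 1)]
  simp [binomialMean_zero_left, binomialMean_one_left, neg_div]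

/-! ### Truncated zeta-star values -/

/-- The partial sum of `ζ*(s)` over `N ≥ n₁ ≥ ⋯ ≥ n_d ≥ 1`, encoded by recursion on the outermost
index `n₁`. -/
noncomputable def truncatedZetaStar : List ℕ → ℕ → ℝ
  | [], _ => 1
  | a :: s, N => ∑ m ∈ Icc 1 N, truncatedZetaStar s m / (m : ℝ) ^ a

theorem truncatedZetaStar_nonneg (s : List ℕ) (N : ℕ) : 0 ≤ truncatedZetaStar s N := by
  induction s generalizing N with
  | nil => simp [truncatedZetaStar]
  | cons a s ih => exact sum_nonneg fun m _ ↦ div_nonneg (ih m) (by positivity)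

theorem monotone_truncatedZetaStar (s : List ℕ) : Monotone (truncatedZetaStar s) := by
  cases s with
  | nil => exact monotone_const
  | cons a s =>
    exact fun M N hMN ↦ sum_le_sum_of_subset_of_nonneg (Icc_subset_Icc_right hMN)
      fun m _ _ ↦ div_nonneg (truncatedZetaStar_nonneg s m) (by positivity)

theorem sum_antitoneTuples_prod_one_div_pow (s : List ℕ) (N : ℕ) :
    ∑ m ∈ antitoneTuples s.length N, ∏ i : Fin s.length, 1 / (m i : ℝ) ^ s.get i =
      truncatedZetaStar s N := by
  induction s generalizing N with
  | nil => simp [truncatedZetaStar, antitoneTuples_zero]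
  | cons a s ih =>
    simp only [List.length_cons, sum_antitoneTuples_succ, truncatedZetaStar]
    refine sum_congr rfl fun m _ ↦ ?_
    rw [← ih m, sum_div]
    refine sum_congr rfl fun t _ ↦ ?_
    rw [Fin.prod_univ_succ]
    simp [div_eq_inv_mul]

theorem LiStar_replicate_one (s : List ℕ) : LiStar s (List.replicate s.length 1) =
    ∑' m : AntitoneTuple s.length, ∏ i : Fin s.length, 1 / (m.1 i : ℝ) ^ s.get i := by
  simp [LiStar]

/-! ### The statistic `Q` -/

section Entries

variable {L : ℕ} (m : ℕ) (t : Fin L → ℕ)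

theorem ent_cons_zero : ent (Fin.cons m t : Fin (L + 1) → ℕ) 0 = m := by
  simp [ent]

theorem ent_cons_succ (i : ℕ) : ent (Fin.cons m t : Fin (L + 1) → ℕ) (i + 1) = ent t i := by
  simp only [ent, Nat.add_lt_add_iff_right]
  rfl

theorem ent_le_ent_zero {t : Fin (L + 1) → ℕ} (ht : ∀ i j, i ≤ j → t j ≤ t i) {i : ℕ}
    (hi : i ≤ L) : ent t i ≤ ent t 0 := by
  simpa [ent, Nat.lt_succ_of_le hi] using ht 0 _ (Fin.zero_le _)

theorem prod_ent_cons : ∏ i ∈ range (L + 1), (ent (Fin.cons m t : Fin (L + 1) → ℕ) i : ℝ) =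
    m * ∏ i ∈ range L, (ent t i : ℝ) := by
  simp only [prod_range_succ', ent_cons_zero, ent_cons_succ, mul_comm]

theorem Qs_one_cons {s : List ℕ} (hs : ∀ e ∈ s, 1 ≤ e) :
    Qs (1 :: s) (Fin.cons m t : Fin (L + 1) → ℕ) = Qs s t := by
  rw [Qs, List.length_cons, sum_range_succ']
  simp only [List.take_succ_cons, List.sum_cons, List.take_zero, List.sum_nil, add_zero,
    Nat.sub_self, Nat.add_sub_cancel_left]
  refine sum_congr rfl fun r hr ↦ ?_
  have htake : 0 < (s.take (r + 1)).sum := by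
    have hlen : 0 < (s.take (r + 1)).length := by
      rw [List.length_take, lt_min_iff]
      exact ⟨r.succ_pos, Nat.zero_lt_of_lt (mem_range.1 hr)⟩
    exact hlen.trans_le
      (List.length_le_sum_of_one_le _ fun e he ↦ hs e (List.mem_of_mem_take he))
  obtain ⟨y, hy⟩ := Nat.exists_eq_add_one.2 htake
  rw [hy, Nat.add_comm 1, ent_cons_succ, ent_cons_succ, Nat.add_sub_cancel]

theorem Qs_add_two_cons {a : ℕ} (s : List ℕ) (hm : ent t 0 ≤ m) (ha : ent t a ≤ ent t 0) :
    Qs ((a + 2) :: s) (Fin.cons m t : Fin (L + 1) → ℕ) =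
      (m - ent t 0) + Qs ((a + 1) :: s) t := by
  have hshift (i : ℕ) : ent (Fin.cons m t : Fin (L + 1) → ℕ) (a + 2 + i) = ent t (a + 1 + i) := by
    rw [show a + 2 + i = a + 1 + i + 1 by omega, ent_cons_succ]
  have hshift_pred (i : ℕ) :
      ent (Fin.cons m t : Fin (L + 1) → ℕ) (a + 2 + i - 1) = ent t (a + 1 + i - 1) := by
    rw [show a + 2 + i - 1 = a + 1 + i - 1 + 1 by omega, ent_cons_succ]
  simp only [Qs, List.length_cons, sum_range_succ', List.take_succ_cons, List.sum_cons,
    List.take_zero, List.sum_nil, hshift, hshift_pred, ent_cons_zero, add_zero,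
    Nat.add_sub_cancel]
  omega

end Entries


/-! ### The deformed series -/

/-- A deformation by `x ∈ [0, 1]` of the summand of the series to be evaluated, which is recovered
as `∫₀¹ qWeight x s t dx`; here `Q` is the statistic `Qs`. -/
noncomputable def qWeight (x : ℝ) (s : List ℕ) {L : ℕ} (t : Fin L → ℕ) : ℝ :=
  x ^ Qs s t * (1 - x ^ ent t (L - 1)) / ∏ i ∈ range L, (ent t i : ℝ)

theorem qWeight_cons {x : ℝ} {s s' : List ℕ} {L m j : ℕ} {t : Fin (L + 1) → ℕ}
    (hQ : Qs s (Fin.cons m t : Fin (L + 2) → ℕ) = j + Qs s' t) :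
    qWeight x s (Fin.cons m t : Fin (L + 2) → ℕ) = x ^ j * qWeight x s' t / m := by
  simp only [qWeight, hQ, prod_ent_cons m t, Nat.add_sub_cancel, ent_cons_succ m t, pow_add]
  rw [mul_comm (m : ℝ), ← div_div]
  ring

/-- The contribution of the tuples with largest entry `m` to the series of `qWeight x s` over
tuples of length `L + 1`. -/
noncomputable def qWeightHeadSum (x : ℝ) (s : List ℕ) (L m : ℕ) : ℝ :=
  ∑ t ∈ antitoneTuples L m, qWeight x s (Fin.cons m t : Fin (L + 1) → ℕ)

theorem sum_qWeight_eq_sum_qWeightHeadSum (x : ℝ) (s : List ℕ) (L N : ℕ) :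
    ∑ t ∈ antitoneTuples (L + 1) N, qWeight x s t = ∑ m ∈ Icc 1 N, qWeightHeadSum x s L m :=
  sum_antitoneTuples_succ L N _

theorem qWeightHeadSum_singleton_one (x : ℝ) (m : ℕ) :
    qWeightHeadSum x [1] 0 m = (1 - x ^ m) / m := by
  simp [qWeightHeadSum, antitoneTuples_zero, qWeight, Qs, ent_cons_zero]

theorem qWeightHeadSum_one_cons (x : ℝ) {s : List ℕ} (hs : ∀ e ∈ s, 1 ≤ e) (L m : ℕ) :
    qWeightHeadSum x (1 :: s) (L + 1) m =
      (∑ t ∈ antitoneTuples (L + 1) m, qWeight x s t) / m := by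
  rw [qWeightHeadSum, sum_div]
  refine sum_congr rfl fun t _ ↦ ?_
  rw [qWeight_cons (by rw [Qs_one_cons m t hs, zero_add]), pow_zero, one_mul]

theorem qWeightHeadSum_add_two_cons (x : ℝ) {a L : ℕ} (ha : a ≤ L) (s : List ℕ) (m : ℕ) :
    qWeightHeadSum x ((a + 2) :: s) (L + 1) m =
      (∑ k ∈ Icc 1 m, x ^ (m - k) * qWeightHeadSum x ((a + 1) :: s) L k) / m := by
  rw [qWeightHeadSum, sum_antitoneTuples_succ, sum_div]
  refine sum_congr rfl fun k hk ↦ ?_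
  rw [qWeightHeadSum, mul_sum, sum_div]
  refine sum_congr rfl fun t ht ↦ qWeight_cons ?_
  have hcons := mem_antitoneTuples.1 (cons_mem_antitoneTuples.2 ⟨hk, ht⟩)
  rw [Qs_add_two_cons, ent_cons_zero]
  · exact (ent_cons_zero k t).trans_le (mem_Icc.1 hk).2
  · exact ent_le_ent_zero hcons.2 ha

theorem sum_qWeight_of_qWeightHeadSum {x : ℝ} {a L : ℕ} {s : List ℕ}
    (h : ∀ m, qWeightHeadSum x (a :: s) L m =
      binomialMean x (fun k ↦ k * (truncatedZetaStar s k / (k : ℝ) ^ a)) m / m) (N : ℕ) :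
    ∑ t ∈ antitoneTuples (L + 1) N, qWeight x (a :: s) t =
      binomialMean x (truncatedZetaStar (a :: s)) N := by
  rw [sum_qWeight_eq_sum_qWeightHeadSum, sum_congr rfl fun m _ ↦ h m,
    sum_binomialMean_cast_mul_div]
  rfl

theorem qWeightHeadSum_add_one_cons_of_one_cons {x : ℝ} {s : List ℕ}
    (h : ∀ m, qWeightHeadSum x (1 :: s) s.sum m =
      binomialMean x (fun k ↦ k * (truncatedZetaStar s k / k)) m / m) (a m : ℕ) :
    qWeightHeadSum x ((a + 1) :: s) (a + s.sum) m =
      binomialMean x (fun k ↦ k * (truncatedZetaStar s k / (k : ℝ) ^ (a + 1))) m / m := by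
  induction a generalizing m with
  | zero => simpa using h m
  | succ a ih =>
    rw [Nat.add_right_comm a 1 s.sum, qWeightHeadSum_add_two_cons x (Nat.le_add_right a _),
      sum_congr rfl fun k _ ↦ by rw [ih k], sum_pow_mul_binomialMean_cast_mul_div]
    have hshift : (fun k : ℕ ↦ (k : ℝ) * (truncatedZetaStar s k / (k : ℝ) ^ (a + 1 + 1))) =
        fun k ↦ truncatedZetaStar s k / (k : ℝ) ^ (a + 1) := by
      ext k
      rcases eq_or_ne k 0 with rfl | hk
      · simp
      · field
    simp [hshift]

theorem qWeightHeadSum_add_one_cons (x : ℝ) {s : List ℕ} (hs : ∀ e ∈ s, 1 ≤ e) (a m : ℕ) :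
    qWeightHeadSum x ((a + 1) :: s) (a + s.sum) m =
      binomialMean x (fun k ↦ k * (truncatedZetaStar s k / (k : ℝ) ^ (a + 1))) m / m := by
  induction s generalizing a m with
  | nil =>
    refine qWeightHeadSum_add_one_cons_of_one_cons (fun m ↦ ?_) a m
    rw [List.sum_nil, qWeightHeadSum_singleton_one, ← binomialMean_ite_eq_zero]
    congr 2 with k
    rcases eq_or_ne k 0 with rfl | hk <;> simp [truncatedZetaStar, *]
  | cons b s ihs =>
    rw [List.forall_mem_cons] at hs
    obtain ⟨c, rfl⟩ := Nat.exists_eq_add_one.2 hs.1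
    refine qWeightHeadSum_add_one_cons_of_one_cons (fun m ↦ ?_) a m
    rw [List.sum_cons, Nat.add_right_comm, qWeightHeadSum_one_cons x (List.forall_mem_cons.2 hs),
      sum_qWeight_of_qWeightHeadSum (ihs hs.2 c)]
    congr 2 with k
    rcases eq_or_ne k 0 with rfl | hk
    · simp [truncatedZetaStar]
    · field

theorem sum_qWeight (x : ℝ) {s : List ℕ} (hd : s ≠ []) (hs : ∀ e ∈ s, 1 ≤ e) (N : ℕ) :
    ∑ t ∈ antitoneTuples s.sum N, qWeight x s t = binomialMean x (truncatedZetaStar s) N := by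
  obtain ⟨b, s, rfl⟩ := List.exists_cons_of_ne_nil hd
  rw [List.forall_mem_cons] at hs
  obtain ⟨c, rfl⟩ := Nat.exists_eq_add_one.2 hs.1
  rw [List.sum_cons, Nat.add_right_comm,
    sum_qWeight_of_qWeightHeadSum (qWeightHeadSum_add_one_cons x hs.2 c)]

/-! ### Integration over the deformation parameter -/

/-- The summand of the series that evaluates `ζ*(s)`; summed over tuples with entries at most `N` it
gives the mean of the truncated values of `ζ*(s)` at `0, …, N`. -/
noncomputable def cesaroSummand (s : List ℕ) {L : ℕ} (t : Fin L → ℕ) : ℝ :=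
  1 / (((Qs s t : ℝ) + 1) * ((Qs s t : ℝ) + (ent t (L - 1) : ℝ) + 1) *
    ∏ i ∈ range (L - 1), (ent t i : ℝ))

theorem cesaroSummand_nonneg (s : List ℕ) {L : ℕ} (t : Fin L → ℕ) : 0 ≤ cesaroSummand s t := by
  unfold cesaroSummand
  positivity

theorem continuous_qWeight (s : List ℕ) {L : ℕ} (t : Fin L → ℕ) :
    Continuous fun x ↦ qWeight x s t := by
  unfold qWeight
  fun_prop

theorem integral_pow_mul_one_sub_pow (q n : ℕ) :
    ∫ x in (0 : ℝ)..1, x ^ q * (1 - x ^ n) = n / (((q : ℝ) + 1) * ((q : ℝ) + n + 1)) := by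
  simp only [mul_sub, mul_one, ← pow_add]
  rw [intervalIntegral.integral_sub ((continuous_pow q).intervalIntegrable 0 1)
    ((continuous_pow (q + n)).intervalIntegrable 0 1), integral_pow, integral_pow]
  have : (q : ℝ) + n + 1 ≠ 0 := by positivity
  simp only [one_pow, ne_eq, Nat.add_eq_zero_iff, one_ne_zero, and_false, not_false_eq_true,
    zero_pow, sub_zero, Nat.cast_add]
  field

theorem integral_qWeight (s : List ℕ) {L : ℕ} (hL : L ≠ 0) {t : Fin L → ℕ} (ht : ∀ i, 1 ≤ t i) :
    ∫ x in (0 : ℝ)..1, qWeight x s t = cesaroSummand s t := by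
  obtain ⟨L, rfl⟩ := Nat.exists_eq_add_one_of_ne_zero hL
  have hlast : (ent t L : ℝ) ≠ 0 := by
    rw [ent, dif_pos L.lt_succ_self, Nat.cast_ne_zero, ← Nat.one_le_iff_ne_zero]
    exact ht _
  simp only [qWeight, cesaroSummand, intervalIntegral.integral_div, prod_range_succ,
    integral_pow_mul_one_sub_pow, Nat.add_sub_cancel]
  field

theorem sum_cesaroSummand {s : List ℕ} (hd : s ≠ []) (hs : ∀ e ∈ s, 1 ≤ e) (N : ℕ) :
    ∑ t ∈ antitoneTuples s.sum N, cesaroSummand s t =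
      (∑ k ∈ range (N + 1), truncatedZetaStar s k) / ((N : ℝ) + 1) := by
  have hintegral : ∀ t ∈ antitoneTuples s.sum N,
      ∫ x in (0 : ℝ)..1, qWeight x s t = cesaroSummand s t := fun t ht ↦
    integral_qWeight s ((List.length_pos_iff.2 hd).trans_le (List.length_le_sum_of_one_le s hs)).ne'
      fun i ↦ ((mem_antitoneTuples.1 ht).1 i).1
  rw [← integral_binomialMean, ← sum_congr rfl hintegral, ← intervalIntegral.integral_finsetSum
    fun t _ ↦ (continuous_qWeight s t).intervalIntegrable 0 1]
  simp only [sum_qWeight _ hd hs]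

/-! ### The series representation -/

theorem stmt_19_general (s : List ℕ) (hd : s ≠ []) (hpos : ∀ e ∈ s, 1 ≤ e) {a : ℝ} :
    HasSum (fun m : AntitoneTuple s.length ↦ ∏ i : Fin s.length, 1 / (m.1 i : ℝ) ^ s.get i) a ↔
      HasSum (fun t : AntitoneTuple s.sum ↦ 1 / (((Qs s t.1 : ℝ) + 1) *
        ((Qs s t.1 : ℝ) + (ent t.1 (s.sum - 1) : ℝ) + 1) *
          ∏ i ∈ Finset.range (s.sum - 1), (ent t.1 i : ℝ))) a := by
  have hzeta := hasSum_antitoneTuple_iff (a := a)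
    (f := fun m ↦ ∏ i : Fin s.length, 1 / (m i : ℝ) ^ s.get i) fun m ↦ by positivity
  have hseries := hasSum_antitoneTuple_iff (a := a) (cesaroSummand_nonneg s (L := s.sum))
  simp only [sum_antitoneTuples_prod_one_div_pow] at hzeta
  simp only [sum_cesaroSummand hd hpos] at hseries
  exact hzeta.trans ((tendsto_cesaro_iff_of_monotone (monotone_truncatedZetaStar s)).symm.trans
    hseries.symm)

/-- New series representation of an arbitrary multiple zeta-star value. -/
theorem stmt_19 (s : List ℕ) (hd : s ≠ []) (hpos : ∀ e ∈ s, 1 ≤ e)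
    (h1 : 1 < s.head hd) :
    LiStar s (List.replicate s.length (1 : ℝ)) =
      ∑' t : {t : Fin s.sum → ℕ // (∀ i j : Fin s.sum, i ≤ j → t j ≤ t i) ∧ ∀ i, 1 ≤ t i},
        1 / (((Qs s t.1 : ℝ) + 1) * ((Qs s t.1 : ℝ) + (ent t.1 (s.sum - 1) : ℝ) + 1) *
          ∏ i ∈ Finset.range (s.sum - 1), (ent t.1 i : ℝ)) := by
  rw [LiStar_replicate_one]
  exact tsum_eq_tsum_of_hasSum_iff_hasSum (stmt_19_general s hd hpos)
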